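/- arXiv:2601.00486 — 8 statements merged into one kernel-verified Lean document; each statement's English description precedes it below -/
import Mathlib

section
/- Let S be a semigroup in which every element is idempotent (a * a = a for all a ∈ S), and let F : (ℤ → S) → (ℤ → S) be the cellular automaton global map induced by f(u,v) = u * v. Then for every n ∈ ℕ, every configuration x : ℤ → S and every i ∈ ℤ, the state of cell i after n iterations equals the left-associated product of consecutive states: [F^[n] x] i = x(i) * x(i+1) * ⋯ * x(i+n). -/
/-!
In a band, consecutive windows of a sequence overlap idempotently: with `q = u 1 * ⋯ * u n`, the
windows `u 0 * q` and `q * u (n + 1)` multiply to `u 0 * (q * q) * u (n + 1)`, the window that is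
longer by one. One step of the automaton multiplies two such windows.
-/

section InitialProd

variable {S : Type*} [Semigroup S]

/-- The product `u 0 * ⋯ * u n` of an initial segment of a sequence. It has `n + 1` factors, since
a semigroup has no empty product. -/
def initialProd (u : ℕ → S) : ℕ → S
  | 0 => u 0
  | n + 1 => initialProd u n * u (n + 1)

theorem initialProd_succ (u : ℕ → S) (n : ℕ) :
    initialProd u (n + 1) = initialProd u n * u (n + 1) := rfl

theorem initialProd_succ' (u : ℕ → S) (n : ℕ) :
    initialProd u (n + 1) = u 0 * initialProd (fun j => u (j + 1)) n := by
  induction n with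
  | zero => rfl
  | succ n ih => rw [initialProd_succ, ih, initialProd_succ, mul_assoc]

theorem foldl_range_mul_eq_initialProd (u : ℕ → S) (n : ℕ) :
    (List.range n).foldl (fun a j => a * u (j + 1)) (u 0) = initialProd u n := by
  induction n with
  | zero => rfl
  | succ n ih => rw [List.range_succ, List.foldl_concat, ih, initialProd_succ]

theorem initialProd_mul_initialProd_shift (hidem : ∀ a : S, IsIdempotentElem a)
    (u : ℕ → S) (n : ℕ) :
    initialProd u n * initialProd (fun j => u (j + 1)) n = initialProd u (n + 1) := by
  cases n with
  | zero => rfl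
  | succ n =>
    let q := initialProd (fun j => u (j + 1)) n
    calc initialProd u (n + 1) * initialProd (fun j => u (j + 1)) (n + 1)
      _ = (u 0 * q) * (q * u (n + 2)) := by rw [initialProd_succ', initialProd_succ]
      _ = u 0 * (q * q) * u (n + 2) := by simp only [mul_assoc]
      _ = u 0 * q * u (n + 2) := by rw [(hidem q).eq]
      _ = initialProd u (n + 2) := by rw [initialProd_succ u (n + 1), initialProd_succ']

end InitialProd

theorem stmt_0_general {ι S : Type*} [Semigroup S] (hidem : ∀ a : S, IsIdempotentElem a)
    (σ : ι → ι) (F : (ι → S) → (ι → S)) (hF : ∀ x i, F x i = x i * x (σ i))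
    (n : ℕ) (x : ι → S) (i : ι) :
    F^[n] x i = initialProd (fun j => x (σ^[j] i)) n := by
  induction n generalizing i with
  | zero => rfl
  | succ n ih =>
    calc F^[n + 1] x i
      _ = F^[n] x i * F^[n] x (σ i) := by rw [Function.iterate_succ_apply', hF]
      _ = initialProd (fun j => x (σ^[j] i)) n * initialProd (fun j => x (σ^[j + 1] i)) n := by
        simp only [ih, Function.iterate_succ_apply]
      _ = initialProd (fun j => x (σ^[j] i)) (n + 1) :=
        initialProd_mul_initialProd_shift hidem (fun j => x (σ^[j] i)) n

/-- Idempotent semigroup CA: the state after `n` iterations is the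
left-associated product `x i * x (i+1) * ⋯ * x (i+n)`. -/
theorem stmt_0 {S : Type*} [Semigroup S] (hidem : ∀ a : S, a * a = a)
    (F : (ℤ → S) → (ℤ → S))
    (hF : ∀ x : ℤ → S, ∀ i : ℤ, F x i = x i * x (i + 1)) :
    ∀ (n : ℕ) (x : ℤ → S) (i : ℤ),
      F^[n] x i = (List.range n).foldl (fun a j => a * x (i + j + 1)) (x i) := by
  intro n x i
  have iterate_add_one (j : ℕ) : (· + 1)^[j] i = i + j := by simp
  rw [stmt_0_general hidem (· + 1) F hF, ← foldl_range_mul_eq_initialProd]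
  -- In the statement `List.range n` is coerced to `List ℤ` through the list monad.
  simp only [List.bind_eq_flatMap, List.pure_def, ← List.map_eq_flatMap, List.foldl_map,
    iterate_add_one, Nat.cast_add_one, Nat.cast_zero, add_zero, add_assoc]
end

section
/- Let M be a commutative monoid and let F : (ℤ → M) → (ℤ → M) be the cellular automaton global map induced by f(u,v) = u * v. Then for every n ∈ ℕ, every configuration x : ℤ → M and every i ∈ ℤ, [F^[n] x] i = ∏_{j=0}^{n} x(i+j)^{C(n,j)}, where C(n,j) denotes the binomial coefficient n choose j. -/
theorem stmt_1_general {ι M : Type*} [CommMonoid M] (T : ι → ι) (F : (ι → M) → (ι → M))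
    (hF : ∀ x i, F x i = x i * x (T i)) (n : ℕ) (x : ι → M) (i : ι) :
    F^[n] x i = ∏ j ∈ Finset.range (n + 1), x (T^[j] i) ^ n.choose j := by
  induction n generalizing i with
  | zero => simp
  | succ n ih =>
    calc F^[n + 1] x i
        = F^[n] x i * F^[n] x (T i) := by rw [Function.iterate_succ_apply', hF]
      _ = (∏ j ∈ Finset.range (n + 1), x (T^[j] i) ^ n.choose j) *
            ∏ j ∈ Finset.range (n + 1), x (T^[j + 1] i) ^ n.choose j := by
          simp only [ih, Function.iterate_succ_apply]
      _ = ∏ j ∈ Finset.range (n + 2), x (T^[j] i) ^ (n + 1).choose j :=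
          (Finset.prod_pow_choose_succ (fun j _ ↦ x (T^[j] i)) n).symm

/-- Commutative monoid CA: the state after `n` iterations is
`∏_{j=0}^{n} x (i+j) ^ C(n,j)`. -/
theorem stmt_1 {M : Type*} [CommMonoid M]
    (F : (ℤ → M) → (ℤ → M))
    (hF : ∀ x : ℤ → M, ∀ i : ℤ, F x i = x i * x (i + 1)) :
    ∀ (n : ℕ) (x : ℤ → M) (i : ℤ),
      F^[n] x i = ∏ j ∈ Finset.range (n + 1), x (i + j) ^ (n.choose j) := by
  simpa only [add_right_iterate, nsmul_one] using stmt_1_general (· + 1) F hF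
end

section
/- Let F : (ℤ → ℤ) → (ℤ → ℤ) be the cellular automaton global map induced by the local function f(u,v) = 1 + (v² − v − 1)(u² − u − 1) (the rule of semigroup G₂). Suppose x : ℤ → ℤ satisfies x(i) ∈ {0,1,2} for all i ∈ ℤ. Then for every n ≥ 1 and every i ∈ ℤ, [F^[n] x] i = 1 + ∏_{j=0}^{n} (x(i+j)² − x(i+j) − 1)^{C(n,j)}, where C(n,j) is the binomial coefficient n choose j. -/
/-!
Write `h u = u² - u - 1`. The rule reads `F x i = 1 + h (x (i + 1)) * h (x i)`, and `h (1 + p) = p`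
whenever `p² = 1`. As `h` takes the values `±1` on `{0, 1, 2}`, it carries `F` to the automaton that
multiplies neighbouring cells, whose iterates are products with binomial exponents by Pascal's rule.
-/

section NeighborMul

variable {ι A M : Type*} [AddMonoidWithOne ι] [CommMonoid M]

/-- The global map of the cellular automaton on configurations `ι → M` whose local function is
multiplication. Cells are indexed by any additive monoid with one, so that one-sided (`ℕ`),
two-sided (`ℤ`) and periodic (`ZMod k`) configurations are all covered. -/
def neighborMul (s : ι → M) (i : ι) : M :=
  s (i + 1) * s i

theorem iterate_neighborMul_apply (s : ι → M) (n : ℕ) (i : ι) :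
    neighborMul^[n] s i = ∏ j ∈ Finset.range (n + 1), s (i + j) ^ n.choose j := by
  induction n generalizing i with
  | zero => simp
  | succ n ih =>
    have shift (j : ℕ) : i + 1 + j = i + (j + 1 : ℕ) := by
      rw [add_assoc, ← Nat.cast_one_add, Nat.add_comm]
    have pascal := Finset.prod_pow_choose_succ (fun j _ ↦ s (i + j)) n
    rw [Function.iterate_succ_apply', neighborMul, ih, ih, pascal, mul_comm]
    simp only [shift]

theorem iterate_neighborMul_mem {S : Submonoid M} {s : ι → M} (hs : ∀ i, s i ∈ S) (n : ℕ) (i : ι) :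
    neighborMul^[n] s i ∈ S := by
  rw [iterate_neighborMul_apply]
  exact S.prod_mem fun j _ ↦ S.pow_mem (hs _) _

variable {F : (ι → A) → ι → A} {e : M → A} {h : A → M} {S : Submonoid M} {x : ι → A}

theorem comp_iterate_eq_iterate_neighborMul (hF : ∀ y, F y = e ∘ neighborMul (h ∘ y))
    (he : Set.LeftInvOn h e S) (hx : ∀ i, h (x i) ∈ S) (n : ℕ) :
    h ∘ F^[n] x = neighborMul^[n] (h ∘ x) := by
  induction n with
  | zero => rfl
  | succ n ih =>
    rw [Function.iterate_succ_apply', hF, ih, ← Function.iterate_succ_apply' neighborMul]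
    exact funext fun i ↦ he (iterate_neighborMul_mem hx (n + 1) i)

theorem iterate_succ_eq_comp_iterate_neighborMul (hF : ∀ y, F y = e ∘ neighborMul (h ∘ y))
    (he : Set.LeftInvOn h e S) (hx : ∀ i, h (x i) ∈ S) (n : ℕ) :
    F^[n + 1] x = e ∘ neighborMul^[n + 1] (h ∘ x) := by
  rw [Function.iterate_succ_apply', hF, comp_iterate_eq_iterate_neighborMul hF he hx,
    Function.iterate_succ_apply']

end NeighborMul

theorem sq_sub_self_sub_one_one_add {R : Type*} [CommRing R] {p : R} (hp : p ^ 2 = 1) :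
    (1 + p) ^ 2 - (1 + p) - 1 = p := by
  linear_combination hp

theorem stmt_3_general {ι R : Type*} [AddMonoidWithOne ι] [CommRing R] (F : (ι → R) → ι → R)
    (hF : ∀ x i, F x i = 1 + (x (i + 1) ^ 2 - x (i + 1) - 1) * (x i ^ 2 - x i - 1))
    (x : ι → R) (hx : ∀ i, (x i ^ 2 - x i - 1) ^ 2 = 1) (n : ℕ) (hn : 1 ≤ n) (i : ι) :
    F^[n] x i = 1 + ∏ j ∈ Finset.range (n + 1), (x (i + j) ^ 2 - x (i + j) - 1) ^ n.choose j := by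
  let h (u : R) : R := u ^ 2 - u - 1
  let involutions : Submonoid R := MonoidHom.mker (powMonoidHom 2)
  have he : Set.LeftInvOn h (1 + ·) involutions := fun _ hp ↦ sq_sub_self_sub_one_one_add hp
  have hF' (y : ι → R) : F y = (1 + ·) ∘ neighborMul (h ∘ y) := funext (hF y)
  obtain ⟨m, rfl⟩ := Nat.exists_eq_add_of_le' hn
  rw [iterate_succ_eq_comp_iterate_neighborMul hF' he hx, Function.comp_apply,
    iterate_neighborMul_apply]
  rfl

/-- Rule G₂: `[F^[n] x] i = 1 + ∏_{j=0}^{n} (x(i+j)² − x(i+j) − 1)^{C(n,j)}`. -/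
theorem stmt_3 (F : (ℤ → ℤ) → (ℤ → ℤ))
    (hF : ∀ x : ℤ → ℤ, ∀ i : ℤ,
      F x i = 1 + (x (i + 1) ^ 2 - x (i + 1) - 1) * (x i ^ 2 - x i - 1))
    (x : ℤ → ℤ) (hx : ∀ i : ℤ, x i ∈ ({0, 1, 2} : Set ℤ)) :
    ∀ n : ℕ, 1 ≤ n → ∀ i : ℤ,
      F^[n] x i = 1 + ∏ j ∈ Finset.range (n + 1),
        (x (i + j) ^ 2 - x (i + j) - 1) ^ (n.choose j) := by
  refine stmt_3_general F hF x fun i ↦ ?_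
  rcases hx i with h | h | h <;> rw [h] <;> norm_num
end

section
/- Let F : (ℤ → ℤ) → (ℤ → ℤ) be the cellular automaton global map induced by the local function f(u,v) = 2·u·(u−2)·v·(v−2) (the rule of semigroup G₃). Suppose x : ℤ → ℤ satisfies x(i) ∈ {0,1,2} for all i ∈ ℤ. Then for every n ≥ 2 and every i ∈ ℤ, [F^[n] x] i = 0. -/
/-!
The values `0` and `2` annihilate every product under the rule `f(u, v) = 2u(u - 2)v(v - 2)`, and
`f` maps `{0, 1, 2} × {0, 1, 2}` into `{0, 2}`. Hence one step of the automaton removes the state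
`1`, a second step reaches the zero configuration, and that configuration is fixed.
-/

open Function

section CellularAutomaton

variable {ι A : Type*}

/-- The global map of the cellular automaton with local rule `f`, where `σ i` is the neighbour of
the cell `i`; the usual one-dimensional automaton has `ι = ℤ` and `σ i = i + 1`. -/
def globalMap (σ : ι → ι) (f : A → A → A) (x : ι → A) : ι → A :=
  fun i ↦ f (x i) (x (σ i))

theorem isFixedPt_globalMap_const (σ : ι → ι) {f : A → A → A} {z : A} (hz : f z z = z) :
    IsFixedPt (globalMap σ f) (const ι z) :=
  funext fun _ ↦ hz

theorem iterate_globalMap_eq_const_of_two_le (σ : ι → ι) {f : A → A → A} {S : Set A} {z : A}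
    (hz : f z z = z) (hS : ∀ a ∈ S, ∀ b ∈ S, ∀ c ∈ S, f (f a b) (f b c) = z)
    {x : ι → A} (hx : ∀ i, x i ∈ S) {n : ℕ} (hn : 2 ≤ n) :
    (globalMap σ f)^[n] x = const ι z := by
  have two_steps : (globalMap σ f)^[2] x = const ι z :=
    funext fun i ↦ hS _ (hx i) _ (hx (σ i)) _ (hx (σ (σ i)))
  obtain ⟨k, rfl⟩ := Nat.exists_eq_add_of_le' hn
  rw [iterate_add_apply, two_steps]
  exact (isFixedPt_globalMap_const σ hz).iterate k

end CellularAutomaton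

section G₃

variable {R : Type*} [Ring R]

/-- The multiplication of the semigroup `G₃` on `{0, 1, 2}`, as a polynomial rule over a ring. -/
def g₃Rule (u v : R) : R :=
  2 * u * (u - 2) * v * (v - 2)

theorem g₃Rule_eq_zero_of_left_mem {u : R} (hu : u ∈ ({0, 2} : Set R)) (v : R) :
    g₃Rule u v = 0 := by
  rcases hu with rfl | rfl <;> simp [g₃Rule]

theorem g₃Rule_mem_zero_two {u v : R} (hu : u ∈ ({0, 1, 2} : Set R))
    (hv : v ∈ ({0, 1, 2} : Set R)) : g₃Rule u v ∈ ({0, 2} : Set R) := by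
  rcases hu with rfl | rfl | rfl <;> rcases hv with rfl | rfl | rfl <;> norm_num [g₃Rule]

theorem stmt_4_general {ι : Type*} (σ : ι → ι) {x : ι → R}
    (hx : ∀ i, x i ∈ ({0, 1, 2} : Set R)) {n : ℕ} (hn : 2 ≤ n) :
    (globalMap σ g₃Rule)^[n] x = 0 :=
  iterate_globalMap_eq_const_of_two_le σ (g₃Rule_eq_zero_of_left_mem (.inl rfl) 0)
    (fun _ ha _ hb _ _ ↦ g₃Rule_eq_zero_of_left_mem (g₃Rule_mem_zero_two ha hb) _) hx hn

end G₃

/-- Rule G₃: for `n ≥ 2`, `[F^[n] x] i = 0`. -/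
theorem stmt_4 (F : (ℤ → ℤ) → (ℤ → ℤ))
    (hF : ∀ x : ℤ → ℤ, ∀ i : ℤ,
      F x i = 2 * x i * (x i - 2) * x (i + 1) * (x (i + 1) - 2))
    (x : ℤ → ℤ) (hx : ∀ i : ℤ, x i ∈ ({0, 1, 2} : Set ℤ)) :
    ∀ n : ℕ, 2 ≤ n → ∀ i : ℤ, F^[n] x i = 0 := by
  obtain rfl : F = globalMap (· + 1) g₃Rule := funext₂ hF
  exact fun n hn ↦ congrFun (stmt_4_general (· + 1) hx hn)
end

section
/- Let F : (ℤ → ℤ) → (ℤ → ℤ) be the cellular automaton global map induced by the local function f(u,v) = 1 + (v−1)(u−1) (the rule of semigroup G₄). Suppose x : ℤ → ℤ satisfies x(i) ∈ {0,1,2} for all i ∈ ℤ. Then for every n ∈ ℕ and every i ∈ ℤ, [F^[n] x] i = 1 + ∏_{j=0}^{n} (x(i+j) − 1)^{C(n,j)}, where C(n,j) is the binomial coefficient n choose j. -/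
/-!
Subtracting `1` from every cell turns the local rule `1 + (v - 1) * (u - 1)` into plain
multiplication `v * u`. The global map then becomes `y ↦ σ y * y`, with `σ` the shift: this is
`σ + 1`, written multiplicatively, so its powers are given by the binomial theorem.
-/

open Finset Function

theorem iterate_map_mul_self {M : Type*} [CommMonoid M] (σ : Monoid.End M) (n : ℕ) (y : M) :
    (fun z ↦ σ z * z)^[n] y = ∏ j ∈ range (n + 1), (σ^[j] y) ^ n.choose j := by
  induction n with
  | zero => simp
  | succ n ih =>
    have pascal := prod_pow_choose_succ (fun j _ ↦ σ^[j] y) n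
    rw [iterate_succ_apply', ih, pascal, mul_comm]
    simp only [map_prod, map_pow, iterate_succ_apply']

section Shift

variable {ι : Type*} [AddMonoidWithOne ι]

/-- The shift of symbolic dynamics, `(shift y) i = y (i + 1)`, on configurations with values in a
monoid. It is bundled as an endomorphism for the pointwise product; the index type may be `ℤ`
(two-sided) or `ℕ` (one-sided). -/
def shift (ι M : Type*) [AddMonoidWithOne ι] [Monoid M] : Monoid.End (ι → M) where
  toFun y i := y (i + 1)
  map_one' := rfl
  map_mul' _ _ := rfl

theorem shift_apply {M : Type*} [Monoid M] (y : ι → M) (i : ι) : shift ι M y i = y (i + 1) := rfl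

theorem shift_iterate_apply {M : Type*} [Monoid M] (j : ℕ) (y : ι → M) (i : ι) :
    (shift ι M)^[j] y i = y (i + j) := by
  induction j generalizing i with
  | zero => simp
  | succ j ih =>
    rw [iterate_succ_apply', shift_apply, ih, add_assoc, ← Nat.cast_one, ← Nat.cast_add,
      Nat.add_comm]

variable {R : Type*} [CommRing R]

theorem semiconj_sub_one_shift_mul_self {F : (ι → R) → (ι → R)}
    (hF : ∀ x i, F x i = 1 + (x (i + 1) - 1) * (x i - 1)) :
    Semiconj (· - 1) F (fun y ↦ shift ι R y * y) := by
  intro x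
  ext i
  simp [hF, shift_apply]

theorem stmt_5_general (F : (ι → R) → (ι → R))
    (hF : ∀ x i, F x i = 1 + (x (i + 1) - 1) * (x i - 1)) (x : ι → R) (n : ℕ) (i : ι) :
    F^[n] x i = 1 + ∏ j ∈ range (n + 1), (x (i + j) - 1) ^ n.choose j := by
  rw [← sub_eq_iff_eq_add']
  calc F^[n] x i - 1
      = (fun y ↦ shift ι R y * y)^[n] (x - 1) i :=
        congrFun ((semiconj_sub_one_shift_mul_self hF).iterate_right n x) i
    _ = ∏ j ∈ range (n + 1), (x (i + j) - 1) ^ n.choose j := by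
        simp only [iterate_map_mul_self, Finset.prod_apply, Pi.pow_apply, shift_iterate_apply,
          Pi.sub_apply, Pi.one_apply]

end Shift

/-- Rule G₄: `[F^[n] x] i = 1 + ∏_{j=0}^{n} (x(i+j) − 1)^{C(n,j)}`. -/
theorem stmt_5 (F : (ℤ → ℤ) → (ℤ → ℤ))
    (hF : ∀ x : ℤ → ℤ, ∀ i : ℤ, F x i = 1 + (x (i + 1) - 1) * (x i - 1))
    (x : ℤ → ℤ) (hx : ∀ i : ℤ, x i ∈ ({0, 1, 2} : Set ℤ)) :
    ∀ (n : ℕ) (i : ℤ),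
      F^[n] x i = 1 + ∏ j ∈ Finset.range (n + 1), (x (i + j) - 1) ^ (n.choose j) :=
  stmt_5_general F hF x
end

section
/- Let F : (ℤ → ℤ) → (ℤ → ℤ) be the cellular automaton global map induced by the local function f(u,v) = 1 + (v² − 3v + 1)(u² − 3u + 1) (the rule of semigroup G₆). Suppose x : ℤ → ℤ satisfies x(i) ∈ {0,1,2} for all i ∈ ℤ. Then for every n ≥ 1 and every i ∈ ℤ, [F^[n] x] i = 1 + ∏_{j=0}^{n} (x(i+j)² − 3·x(i+j) + 1)^{C(n,j)}, where C(n,j) is the binomial coefficient n choose j. -/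
/-!
In the commutative ring of configurations, put `q = x ^ 2 - 3 * x + 1`. One step of the automaton
is `x ↦ 1 + D q`, where `D` multiplies every cell by its right neighbour. Because `q ^ 2 = 1` and
`D` is a monoid homomorphism, `s = D^[n] q` satisfies `s ^ 2 = 1`; the quadratic then sends `1 + s`
to `-s`, and `D` cannot see the sign. So iterating the rule iterates `D`, whose iterates are
governed by Pascal's triangle.
-/

section AdjacentMul

variable {ι M : Type*}

/-- The cellular automaton that multiplies each cell by its right neighbour, the multiplicative
analogue of the XOR rule. It is bundled as a monoid homomorphism of the pointwise monoid of
configurations, so that its iterates commute with powers. -/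
def adjacentMul [Add ι] [One ι] [CommMonoid M] : (ι → M) →* (ι → M) where
  toFun y i := y i * y (i + 1)
  map_one' := funext fun _ => mul_one 1
  map_mul' _ _ := funext fun _ => mul_mul_mul_comm _ _ _ _

theorem adjacentMul_apply [Add ι] [One ι] [CommMonoid M] (y : ι → M) (i : ι) :
    adjacentMul y i = y i * y (i + 1) :=
  rfl

theorem adjacentMul_neg [Add ι] [One ι] [CommMonoid M] [HasDistribNeg M] (y : ι → M) :
    adjacentMul (-y) = adjacentMul y :=
  funext fun _ => neg_mul_neg _ _

theorem adjacentMul_iterate_apply [AddMonoidWithOne ι] [CommMonoid M] (y : ι → M) (n : ℕ)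
    (i : ι) :
    adjacentMul^[n] y i = ∏ j ∈ Finset.range (n + 1), y (i + j) ^ n.choose j := by
  induction n generalizing i with
  | zero => simp
  | succ n ih =>
    have shift (j : ℕ) : i + 1 + (j : ι) = i + ((j + 1 : ℕ) : ι) := by
      rw [add_assoc, add_comm j 1, Nat.cast_add, Nat.cast_one]
    rw [Function.iterate_succ_apply', adjacentMul_apply, ih, ih,
      Finset.prod_pow_choose_succ fun j _ => y (i + j)]
    simp only [shift]

end AdjacentMul

theorem quadratic_one_add_of_sq_eq_one {R : Type*} [Ring R] {s : R} (hs : s ^ 2 = 1) :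
    (1 + s) ^ 2 - 3 * (1 + s) + 1 = -s :=
  calc
    (1 + s) ^ 2 - 3 * (1 + s) + 1 = s ^ 2 - 1 - s := by noncomm_ring
    _ = -s := by rw [hs, sub_self, zero_sub]

section Automaton

variable {ι R : Type*} [CommRing R]

theorem iterate_succ_eq_one_add_adjacentMul_iterate [Add ι] [One ι]
    {F : (ι → R) → (ι → R)} (hF : ∀ x, F x = 1 + adjacentMul (x ^ 2 - 3 * x + 1)) {x : ι → R}
    (hx : (x ^ 2 - 3 * x + 1) ^ 2 = 1) (n : ℕ) :
    F^[n + 1] x = 1 + adjacentMul^[n + 1] (x ^ 2 - 3 * x + 1) := by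
  induction n with
  | zero => exact hF x
  | succ n ih =>
    have sq_eq_one : (adjacentMul^[n + 1] (x ^ 2 - 3 * x + 1)) ^ 2 = 1 := by
      rw [← iterate_map_pow, hx, iterate_map_one]
    rw [Function.iterate_succ_apply', ih, hF, quadratic_one_add_of_sq_eq_one sq_eq_one,
      adjacentMul_neg, ← Function.iterate_succ_apply' adjacentMul]

theorem stmt_7_general [AddMonoidWithOne ι] (F : (ι → R) → (ι → R))
    (hF : ∀ x : ι → R, ∀ i : ι,
      F x i = 1 + (x (i + 1) ^ 2 - 3 * x (i + 1) + 1) * (x i ^ 2 - 3 * x i + 1))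
    (x : ι → R) (hx : ∀ i : ι, (x i ^ 2 - 3 * x i + 1) ^ 2 = 1) (n : ℕ) (hn : 1 ≤ n) (i : ι) :
    F^[n] x i = 1 + ∏ j ∈ Finset.range (n + 1),
      (x (i + j) ^ 2 - 3 * x (i + j) + 1) ^ (n.choose j) := by
  obtain ⟨m, rfl⟩ := Nat.exists_eq_add_of_le' hn
  have step (z : ι → R) : F z = 1 + adjacentMul (z ^ 2 - 3 * z + 1) :=
    funext fun k => (hF z k).trans (congrArg (1 + ·) (mul_comm _ _))
  rw [iterate_succ_eq_one_add_adjacentMul_iterate step (funext hx), Pi.add_apply, Pi.one_apply,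
    adjacentMul_iterate_apply]
  rfl

end Automaton

/-- Rule G₆: `[F^[n] x] i = 1 + ∏_{j=0}^{n} (x(i+j)² − 3x(i+j) + 1)^{C(n,j)}`. -/
theorem stmt_7 (F : (ℤ → ℤ) → (ℤ → ℤ))
    (hF : ∀ x : ℤ → ℤ, ∀ i : ℤ,
      F x i = 1 + (x (i + 1) ^ 2 - 3 * x (i + 1) + 1) * (x i ^ 2 - 3 * x i + 1))
    (x : ℤ → ℤ) (hx : ∀ i : ℤ, x i ∈ ({0, 1, 2} : Set ℤ)) :
    ∀ n : ℕ, 1 ≤ n → ∀ i : ℤ,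
      F^[n] x i = 1 + ∏ j ∈ Finset.range (n + 1),
        (x (i + j) ^ 2 - 3 * x (i + j) + 1) ^ (n.choose j) :=
  stmt_7_general F hF x fun i => by
    rcases hx i with h | h | h <;> rw [h] <;> norm_num
end

section
/- Let F : (ℤ → ℤ) → (ℤ → ℤ) be the cellular automaton global map induced by the local function f(u,v) = u·(u−2)·v·(v−2) (the rule of semigroup G₈). Suppose x : ℤ → ℤ satisfies x(i) ∈ {0,1,2} for all i ∈ ℤ. Then for every n ≥ 1 and every i ∈ ℤ, [F^[n] x] i = ∏_{j=0}^{n} x(i+j)·(2 − x(i+j)). -/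
/-! Put `φ u = u * (2 - u)`. The rule is `(u, v) ↦ φ u * φ v`, the values of `φ` on `{0, 1, 2}` are
idempotent, and `φ` fixes every idempotent. Hence `x` and `φ ∘ x` have the same image under `F`, and
on idempotent configurations `F` multiplies each cell by its right neighbour; as repeated factors
are absorbed, each such multiplication lengthens the window of the product by one cell. -/

open Finset

section CommMonoid

variable {M : Type*} [CommMonoid M]

theorem isIdempotentElem_prod {α : Type*} {s : Finset α} {a : α → M}
    (ha : ∀ j ∈ s, IsIdempotentElem (a j)) : IsIdempotentElem (∏ j ∈ s, a j) :=
  prod_induction a IsIdempotentElem (fun _ _ => IsIdempotentElem.mul) .one ha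

theorem prod_range_succ_mul_prod_range_succ_shift {a : ℕ → M} (ha : ∀ j, IsIdempotentElem (a j))
    (n : ℕ) :
    (∏ j ∈ range (n + 1), a j) * ∏ j ∈ range (n + 1), a (j + 1) = ∏ j ∈ range (n + 2), a j := by
  have overlap : IsIdempotentElem (∏ j ∈ range n, a (j + 1)) :=
    isIdempotentElem_prod fun j _ => ha (j + 1)
  calc (∏ j ∈ range (n + 1), a j) * ∏ j ∈ range (n + 1), a (j + 1)
      = (∏ j ∈ range n, a (j + 1)) * a 0 * ((∏ j ∈ range n, a (j + 1)) * a (n + 1)) := by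
        rw [prod_range_succ', prod_range_succ (fun j => a (j + 1))]
    _ = (∏ j ∈ range n, a (j + 1)) * (∏ j ∈ range n, a (j + 1)) * (a 0 * a (n + 1)) :=
        mul_mul_mul_comm _ _ _ _
    _ = (∏ j ∈ range n, a (j + 1)) * a 0 * a (n + 1) := by rw [overlap.eq, mul_assoc]
    _ = ∏ j ∈ range (n + 2), a j := by rw [prod_range_succ _ (n + 1), prod_range_succ']

theorem iterate_apply_eq_prod_of_isIdempotentElem {ι : Type*} [AddMonoidWithOne ι]
    {F : (ι → M) → (ι → M)}
    (hF : ∀ y : ι → M, (∀ i, IsIdempotentElem (y i)) → ∀ i, F y i = y i * y (i + 1))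
    {y : ι → M} (hy : ∀ i, IsIdempotentElem (y i)) (n : ℕ) (i : ι) :
    F^[n] y i = ∏ j ∈ range (n + 1), y (i + j) := by
  induction n generalizing i with
  | zero => simp
  | succ n ih =>
    have iterate_idem : ∀ i, IsIdempotentElem (F^[n] y i) := fun i => by
      rw [ih]
      exact isIdempotentElem_prod fun j _ => hy (i + j)
    have shift (j : ℕ) : i + 1 + (j : ι) = i + ((j + 1 : ℕ) : ι) := by
      rw [add_comm j, Nat.cast_add, Nat.cast_one, add_assoc]
    rw [Function.iterate_succ_apply', hF _ iterate_idem, ih, ih]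
    simp only [shift]
    exact prod_range_succ_mul_prod_range_succ_shift (fun j => hy (i + j)) n

end CommMonoid

theorem mul_two_sub_self_of_isIdempotentElem {R : Type*} [Ring R] {e : R}
    (he : IsIdempotentElem e) : e * (2 - e) = e := by
  rw [mul_sub, he.eq, mul_two, add_sub_cancel_right]

theorem stmt_8_general {R ι : Type*} [CommRing R] [AddMonoidWithOne ι] (F : (ι → R) → (ι → R))
    (hF : ∀ x : ι → R, ∀ i : ι,
      F x i = x i * (x i - 2) * x (i + 1) * (x (i + 1) - 2))
    (x : ι → R) (hx : ∀ i : ι, IsIdempotentElem (x i * (2 - x i))) :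
    ∀ n : ℕ, 1 ≤ n → ∀ i : ι,
      F^[n] x i = ∏ j ∈ range (n + 1), x (i + j) * (2 - x (i + j)) := by
  have F_apply (z : ι → R) (i : ι) :
      F z i = z i * (2 - z i) * (z (i + 1) * (2 - z (i + 1))) := by
    rw [hF]
    ring
  have F_apply_of_idem (z : ι → R) (hz : ∀ i, IsIdempotentElem (z i)) (i : ι) :
      F z i = z i * z (i + 1) := by
    rw [F_apply, mul_two_sub_self_of_isIdempotentElem (hz _),
      mul_two_sub_self_of_isIdempotentElem (hz _)]
  have F_eq : F x = F fun i => x i * (2 - x i) :=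
    funext fun i => (F_apply x i).trans (F_apply_of_idem _ hx i).symm
  intro n hn i
  obtain ⟨m, rfl⟩ := Nat.exists_eq_add_of_le' hn
  rw [Function.iterate_succ_apply, F_eq, ← Function.iterate_succ_apply]
  exact iterate_apply_eq_prod_of_isIdempotentElem F_apply_of_idem hx (m + 1) i

theorem isIdempotentElem_mul_two_sub_of_mem {a : ℤ} (ha : a ∈ ({0, 1, 2} : Set ℤ)) :
    IsIdempotentElem (a * (2 - a)) := by
  rcases ha with rfl | rfl | rfl <;> rfl

/-- Rule G₈: `[F^[n] x] i = ∏_{j=0}^{n} x(i+j)·(2 − x(i+j))`. -/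
theorem stmt_8 (F : (ℤ → ℤ) → (ℤ → ℤ))
    (hF : ∀ x : ℤ → ℤ, ∀ i : ℤ,
      F x i = x i * (x i - 2) * x (i + 1) * (x (i + 1) - 2))
    (x : ℤ → ℤ) (hx : ∀ i : ℤ, x i ∈ ({0, 1, 2} : Set ℤ)) :
    ∀ n : ℕ, 1 ≤ n → ∀ i : ℤ,
      F^[n] x i = ∏ j ∈ Finset.range (n + 1), x (i + j) * (2 - x (i + j)) :=
  stmt_8_general F hF x fun i => isIdempotentElem_mul_two_sub_of_mem (hx i)
end

section
/- Let F : (ℤ → ℤ) → (ℤ → ℤ) be the cellular automaton global map induced by the local function f(u,v) = u·v·(2 − u) (the rule of semigroup G₁₂). Suppose x : ℤ → ℤ satisfies x(i) ∈ {0,1,2} for all i ∈ ℤ. Then for every n ∈ ℕ and every i ∈ ℤ, [F^[n] x] i = x(i+n) · ∏_{j=0}^{n−1} x(i+j)·(2 − x(i+j)). -/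
/-! Write `e a = a * (2 - a)`, so that `F x i = e (x i) * x (i + 1)`. On `{0, 1, 2}` the value `e a`
is idempotent, and idempotents `c` pass through `e`: `e (c * a) = c * e a`. Hence, by induction,
`F^[n + 1] x i` is `x (i + n + 1)` times the products of the idempotents `e (x (i + j))` over
`0 ≤ j ≤ n` and over `1 ≤ j ≤ n`, and the second product is absorbed by the first. -/

section CommMonoid

variable {M : Type*} [CommMonoid M]

theorem isIdempotentElem_prod_s12 {κ : Type*} {s : Finset κ} {f : κ → M}
    (hf : ∀ k ∈ s, IsIdempotentElem (f k)) : IsIdempotentElem (∏ k ∈ s, f k) :=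
  Finset.prod_induction f IsIdempotentElem (fun _ _ ha hb ↦ ha.mul hb) .one hf

theorem prod_range_succ_mul_prod_range_shift {f : ℕ → M} (n : ℕ)
    (hf : ∀ j ∈ Finset.range n, IsIdempotentElem (f (j + 1))) :
    (∏ j ∈ Finset.range (n + 1), f j) * ∏ j ∈ Finset.range n, f (j + 1) =
      ∏ j ∈ Finset.range (n + 1), f j := by
  rw [Finset.prod_range_succ', mul_right_comm, isIdempotentElem_prod_s12 hf]

end CommMonoid

theorem mul_mul_two_sub_mul_of_isIdempotentElem {R : Type*} [CommRing R] {c : R}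
    (hc : IsIdempotentElem c) (a : R) : c * a * (2 - c * a) = c * (a * (2 - a)) := by
  linear_combination -a ^ 2 * hc.eq

theorem isIdempotentElem_mul_two_sub {R : Type*} [Ring R] {a : R} (ha : a ∈ ({0, 1, 2} : Set R)) :
    IsIdempotentElem (a * (2 - a)) := by
  rcases ha with rfl | rfl | rfl <;> norm_num [IsIdempotentElem]

theorem stmt_12_general {ι R : Type*} [AddMonoidWithOne ι] [CommRing R] {F : (ι → R) → (ι → R)}
    (hF : ∀ x i, F x i = x i * x (i + 1) * (2 - x i)) {x : ι → R}
    (hx : ∀ i, IsIdempotentElem (x i * (2 - x i))) (n : ℕ) (i : ι) :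
    F^[n] x i = x (i + n) * ∏ j ∈ Finset.range n, x (i + j) * (2 - x (i + j)) := by
  induction n generalizing i with
  | zero => simp
  | succ n ih =>
    let e : ℕ → R := fun j ↦ x (i + j) * (2 - x (i + j))
    have add_one_add (j : ℕ) : i + 1 + j = i + (j + 1 : ℕ) := by
      rw [add_assoc, Nat.cast_succ, Nat.cast_add_one_comm]
    have ih_left : F^[n] x i = (∏ j ∈ Finset.range n, e j) * x (i + n) := by
      rw [ih, mul_comm]
    have ih_right : F^[n] x (i + 1) = x (i + (n + 1 : ℕ)) * ∏ j ∈ Finset.range n, e (j + 1) := by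
      simp only [ih, add_one_add, e]
    have prod_idem : IsIdempotentElem (∏ j ∈ Finset.range n, e j) :=
      isIdempotentElem_prod_s12 fun j _ ↦ hx (i + j)
    calc F^[n + 1] x i
      _ = F^[n] x i * (2 - F^[n] x i) * F^[n] x (i + 1) := by
        rw [Function.iterate_succ_apply', hF, mul_right_comm]
      _ = (∏ j ∈ Finset.range (n + 1), e j) * F^[n] x (i + 1) := by
        rw [ih_left, mul_mul_two_sub_mul_of_isIdempotentElem prod_idem, Finset.prod_range_succ]
      _ = x (i + (n + 1 : ℕ)) *
          ((∏ j ∈ Finset.range (n + 1), e j) * ∏ j ∈ Finset.range n, e (j + 1)) := by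
        rw [ih_right, mul_left_comm]
      _ = x (i + (n + 1 : ℕ)) * ∏ j ∈ Finset.range (n + 1), e j := by
        rw [prod_range_succ_mul_prod_range_shift n fun j _ ↦ hx (i + (j + 1 : ℕ))]

/-- Rule G₁₂: `[F^[n] x] i = x(i+n) · ∏_{j=0}^{n−1} x(i+j)·(2 − x(i+j))`. -/
theorem stmt_12 (F : (ℤ → ℤ) → (ℤ → ℤ))
    (hF : ∀ x : ℤ → ℤ, ∀ i : ℤ, F x i = x i * x (i + 1) * (2 - x i))
    (x : ℤ → ℤ) (hx : ∀ i : ℤ, x i ∈ ({0, 1, 2} : Set ℤ)) :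
    ∀ (n : ℕ) (i : ℤ),
      F^[n] x i = x (i + n) * ∏ j ∈ Finset.range n, x (i + j) * (2 - x (i + j)) :=
  stmt_12_general hF fun i ↦ isIdempotentElem_mul_two_sub (hx i)
end
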